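/- Let T be a positive integer and suppose there exists a finite set A ⊆ [1,T] of positive integers with max A = T and |A+A| − |A−A| ≥ 10|A|. Then for every integer r ≥ 4T + 24, the interval [1,r] can be partitioned into exactly three pairwise disjoint MSTD subsets whose union is [1,r]. -/

import Mathlib

/-!
A translate of any MSTD set can be completed to a partition of a long interval `[1, r]` into three
MSTD sets. Put the translate in a window with long segments on both sides, and split the rest into
two sets `C` and `D` that, in these segments and away from the ends `1` and `r`, are unions of
residue classes mod 8, counted in each segment from the end of `[1, r]`. Every class mod 8 is a sum
and a difference of the classes chosen for `C`, and likewise for `D`, so sums of elements of the two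
segments miss nothing outside a bounded range near `2` and `2r`, whatever happens in the window.
What remains is a finite comparison: near the ends the classes are modified so that `C + C` misses
fewer integers near `2` and `2r` than `C - C` misses near `±(r - 1)`, and likewise for `D`.

Starting from Conway's eight-element MSTD set this works for every `r ≥ 93`, whereas the existence
of a 10-strong set in `[1, T]` forces `121 ≤ 2T - 1` and hence `4T + 24 ≥ 93`.
-/

open Finset Pointwise

/-- A finite set of integers is MSTD (more-sums-than-differences) if `|A+A| > |A-A|`. -/
def MSTD (A : Finset ℤ) : Prop := (A - A).card < (A + A).card

section Residues

variable {m : ℕ} [NeZero m] {R S : Finset (ZMod m)}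

lemma exists_mem_Ico_intCast_eq (a : ℤ) (c : ZMod m) : ∃ x ∈ Ico a (a + m), (x : ZMod m) = c := by
  refine ⟨a + (c - (a : ZMod m)).val, mem_Ico.2 ?_, by simp⟩
  have := ZMod.val_lt (c - (a : ZMod m))
  omega

lemma Icc_subset_add_of_residues (hRS : R + S = univ) {X Y : Finset ℤ} {a b c d : ℤ}
    (hab : a + m ≤ b + 1) (hcd : c + m ≤ d + 1)
    (hX : ∀ x ∈ Icc a b, (x : ZMod m) ∈ R → x ∈ X)
    (hY : ∀ y ∈ Icc c d, (y : ZMod m) ∈ S → y ∈ Y) :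
    Icc (a + c + m - 1) (b + d - m + 1) ⊆ X + Y := by
  intro s hs
  obtain ⟨ρ, hρ, σ, hσ, hρσ⟩ := mem_add.1 (hRS ▸ mem_univ (s : ZMod m))
  obtain ⟨x, hx, rfl⟩ := exists_mem_Ico_intCast_eq (max a (s - d)) ρ
  have hy : ((s - x : ℤ) : ZMod m) = σ := by rw [Int.cast_sub, ← hρσ, add_sub_cancel_left]
  rw [mem_Icc] at hs
  rw [mem_Ico] at hx
  exact mem_add.2 ⟨x, hX x (mem_Icc.2 (by omega)) hρ,
    s - x, hY (s - x) (mem_Icc.2 (by omega)) (hy ▸ hσ), by omega⟩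

lemma Icc_subset_add_self_of_residues (hadd : R + R = univ) (hsub : R - R = univ)
    {G : Finset ℤ} {r u v T k : ℤ} (hr : u + T + v = r) (hT : 0 ≤ T)
    (hu : T + k + 2 * m ≤ u + 2) (hv : T + k + 2 * m ≤ v + 2)
    (hleft : ∀ x ∈ Icc k u, (x : ZMod m) ∈ R → x ∈ G)
    (hright : ∀ x ∈ Icc k v, (x : ZMod m) ∈ R → r + 1 - x ∈ G) :
    Icc (2 * k + m - 1) (2 * (r + 1 - k) - m + 1) ⊆ G + G := by
  have hm : 0 < m := Nat.pos_of_neZero m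
  set c : ZMod m := ((r + 1 : ℤ) : ZMod m) with hc
  have hright' : ∀ y ∈ Icc (r + 1 - v) (r + 1 - k), (y : ZMod m) ∈ {c} - R → y ∈ G := by
    intro y hy hyR
    obtain ⟨ρ, hρ, hyρ⟩ : ∃ ρ ∈ R, c - ρ = y := by simpa [mem_sub] using hyR
    have hcast : ((r + 1 - y : ℤ) : ZMod m) = ρ := by
      rw [Int.cast_sub, ← hc, ← hyρ, sub_sub_cancel]
    rw [mem_Icc] at hy
    simpa using hright (r + 1 - y) (mem_Icc.2 (by omega)) (hcast ▸ hρ)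
  have hLR : R + ({c} - R) = univ := by
    rw [add_sub_left_comm, hsub, ← card_eq_iff_eq_univ, card_singleton_add, card_univ]
  have hRR : ({c} - R) + ({c} - R) = univ := by
    rw [sub_add_sub_comm, hadd, singleton_add_singleton, sub_eq_add_neg, neg_univ,
      ← card_eq_iff_eq_univ, card_singleton_add, card_univ]
  have left_left := Icc_subset_add_of_residues hadd (by omega) (by omega) hleft hleft
  have left_right := Icc_subset_add_of_residues hLR (by omega) (by omega) hleft hright'
  have right_right := Icc_subset_add_of_residues hRR (by omega) (by omega) hright' hright'
  intro s hs
  rw [mem_Icc] at hs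
  by_cases h₁ : s ≤ u + u - m + 1
  · exact left_left (mem_Icc.2 (by omega))
  by_cases h₂ : s ≤ u + (r + 1 - k) - m + 1
  · exact left_right (mem_Icc.2 (by omega))
  · exact right_right (mem_Icc.2 (by omega))

end Residues

lemma mstd_iff_card_sdiff_lt {G : Finset ℤ} {r : ℤ} (hG : G ⊆ Icc 1 r) :
    MSTD G ↔ #(Icc 2 (2 * r) \ (G + G)) < #(Icc (1 - r) (r - 1) \ (G - G)) := by
  have hadd : G + G ⊆ Icc 2 (2 * r) :=
    (add_subset_add hG hG).trans ((Icc_add_Icc_subset _ _ _ _).trans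
      (Icc_subset_Icc (by omega) (by omega)))
  have hsub : G - G ⊆ Icc (1 - r) (r - 1) := by
    intro d hd
    obtain ⟨x, hx, y, hy, rfl⟩ := mem_sub.1 hd
    have hx' := mem_Icc.1 (hG hx)
    have hy' := mem_Icc.1 (hG hy)
    exact mem_Icc.2 (by omega)
  have cadd := card_sdiff_add_card_eq_card hadd
  have csub := card_sdiff_add_card_eq_card hsub
  rw [Int.card_Icc] at cadd csub
  unfold MSTD
  omega

section Ends

/-- The elements of `[2, n + 1]` that are not of the form `x + y` with `x, y ≥ 1`, `p x` and `q y`;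
the truncation to `x, y ≤ n` loses nothing, as it holds for every such representation. -/
noncomputable def missingSums (p q : ℤ → Prop) [DecidablePred p] [DecidablePred q] (n : ℤ) :
    Finset ℤ :=
  Icc 2 (n + 1) \ ({x ∈ Icc 1 n | p x} + {y ∈ Icc 1 n | q y})

/-- `G` is a subset of `[1, r]` whose initial segment of length `u` is given by `p` and whose final
segment of length `v` is given by `q`, where positions in the final segment are counted backwards
with `r` in position `1`. -/
structure HasEnds (G : Finset ℤ) (r u v : ℤ) (p q : ℤ → Prop) : Prop where
  subset : G ⊆ Icc 1 r
  left : ∀ x ∈ Icc 1 u, (x ∈ G ↔ p x)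
  right : ∀ x ∈ Icc 1 v, (r + 1 - x ∈ G ↔ q x)

variable {p q : ℤ → Prop} {G : Finset ℤ} {r u v n : ℤ}

lemma HasEnds.mono {u' v' : ℤ} (h : HasEnds G r u v p q) (hu : u' ≤ u) (hv : v' ≤ v) :
    HasEnds G r u' v' p q where
  subset := h.subset
  left x hx := h.left x (Icc_subset_Icc_right hu hx)
  right x hx := h.right x (Icc_subset_Icc_right hv hx)

lemma HasEnds.sdiff (h : HasEnds G r u v p q) {B : Finset ℤ} (hB : B ⊆ Icc (u + 1) (r - v))
    (hu : u ≤ r) (hv : v ≤ r) :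
    HasEnds (Icc 1 r \ (B ∪ G)) r u v (¬ p ·) (¬ q ·) where
  subset := sdiff_subset
  left x hx := by
    have hxB : x ∉ B := by grind
    have hxr : x ∈ Icc 1 r := by grind
    simp [hxB, hxr, ← h.left x hx]
  right x hx := by
    have hxB : r + 1 - x ∉ B := by grind
    have hxr : r + 1 - x ∈ Icc 1 r := by grind
    simp only [mem_sdiff, mem_union, hxB, hxr, ← h.right x hx, true_and, false_or]

lemma exists_hasEnds (hu : 0 ≤ u) (hv : 0 ≤ v) (huv : u + v ≤ r) (p q : ℤ → Prop) :
    ∃ G, HasEnds G r u v p q ∧ Disjoint (Icc (u + 1) (r - v)) G := by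
  classical
  refine ⟨{x ∈ Icc 1 r | (x ≤ u ∧ p x) ∨ (r - v < x ∧ q (r + 1 - x))},
    ⟨filter_subset _ _, fun x hx ↦ ?_, fun x hx ↦ ?_⟩, disjoint_left.2 fun x hx hxG ↦ ?_⟩ <;> grind

variable [DecidablePred p] [DecidablePred q]

lemma HasEnds.card_sdiff_le_card_missingSums_add (h : HasEnds G r n n p q)
    (hcover : Icc (n + 2) (2 * r - n) ⊆ G + G) :
    #(Icc 2 (2 * r) \ (G + G)) ≤ #(missingSums p p n) + #(missingSums q q n) := by
  have hsub : Icc 2 (2 * r) \ (G + G) ⊆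
      missingSums p p n ∪ (missingSums q q n).image (2 * r + 2 - ·) := by
    intro s hs
    obtain ⟨hsr, hsG⟩ := mem_sdiff.1 hs
    rw [mem_Icc] at hsr
    by_cases hlow : s ≤ n + 1
    · refine mem_union_left _ (mem_sdiff.2 ⟨mem_Icc.2 ⟨hsr.1, hlow⟩, fun hsp ↦ hsG ?_⟩)
      obtain ⟨x, hx, y, hy, rfl⟩ := mem_add.1 hsp
      rw [mem_filter] at hx hy
      exact add_mem_add ((h.left x hx.1).2 hx.2) ((h.left y hy.1).2 hy.2)
    have hhigh : 2 * r - n < s := by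
      by_contra! hle
      exact hsG (hcover (mem_Icc.2 ⟨by omega, hle⟩))
    refine mem_union_right _ (mem_image.2 ⟨2 * r + 2 - s, mem_sdiff.2 ⟨mem_Icc.2 (by omega),
      fun hsq ↦ hsG ?_⟩, by omega⟩)
    obtain ⟨x, hx, y, hy, hxy⟩ := mem_add.1 hsq
    rw [mem_filter] at hx hy
    exact mem_add.2 ⟨_, (h.right x hx.1).2 hx.2, _, (h.right y hy.1).2 hy.2, by omega⟩
  calc #(Icc 2 (2 * r) \ (G + G))
      ≤ #(missingSums p p n ∪ (missingSums q q n).image (2 * r + 2 - ·)) := card_le_card hsub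
    _ ≤ #(missingSums p p n) + #((missingSums q q n).image (2 * r + 2 - ·)) := card_union_le _ _
    _ ≤ #(missingSums p p n) + #(missingSums q q n) := add_le_add_right card_image_le _

lemma HasEnds.sub_ne_of_mem_missingSums (h : HasEnds G r n n p q) {t : ℤ}
    (ht : t ∈ missingSums p q n) {x y : ℤ} (hx : x ∈ G) (hy : y ∈ G) : y - x ≠ r + 1 - t := by
  intro hxy
  obtain ⟨htn, htpq⟩ := mem_sdiff.1 ht
  have hx' := mem_Icc.1 (h.subset hx)
  have hy' := mem_Icc.1 (h.subset hy)
  rw [mem_Icc] at htn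
  have hxn : x ∈ Icc 1 n := mem_Icc.2 (by omega)
  have hyn : r + 1 - y ∈ Icc 1 n := mem_Icc.2 (by omega)
  have hqy : q (r + 1 - y) := (h.right _ hyn).1 (by simpa using hy)
  exact htpq (mem_add.2 ⟨x, mem_filter.2 ⟨hxn, (h.left x hxn).1 hx⟩,
    r + 1 - y, mem_filter.2 ⟨hyn, hqy⟩, by omega⟩)

lemma HasEnds.two_mul_card_missingSums_le_card_sdiff (h : HasEnds G r n n p q) (hn : n < r) :
    2 * #(missingSums p q n) ≤ #(Icc (1 - r) (r - 1) \ (G - G)) := by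
  set K := missingSums p q n
  have hKn : ∀ t ∈ K, 2 ≤ t ∧ t ≤ n + 1 := fun t ht ↦ mem_Icc.1 (mem_sdiff.1 ht).1
  have hdisj : Disjoint (K.image (r + 1 - ·)) (K.image (· - (r + 1))) := by
    rw [disjoint_left]
    simp only [mem_image]
    rintro _ ⟨t, ht, rfl⟩ ⟨t', ht', htt'⟩
    have := hKn t ht
    have := hKn t' ht'
    omega
  have hsub : K.image (r + 1 - ·) ∪ K.image (· - (r + 1)) ⊆ Icc (1 - r) (r - 1) \ (G - G) := by
    intro d hd
    simp only [mem_union, mem_image] at hd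
    rw [mem_sdiff, mem_Icc, mem_sub]
    rcases hd with ⟨t, ht, rfl⟩ | ⟨t, ht, rfl⟩ <;> have htn := hKn t ht
    · refine ⟨by omega, ?_⟩
      rintro ⟨y, hy, x, hx, hyx⟩
      exact h.sub_ne_of_mem_missingSums ht hx hy hyx
    · refine ⟨by omega, ?_⟩
      rintro ⟨y, hy, x, hx, hyx⟩
      exact h.sub_ne_of_mem_missingSums ht hy hx (by omega)
  calc 2 * #K = #(K.image (r + 1 - ·)) + #(K.image (· - (r + 1))) := by
        rw [card_image_of_injective _ sub_right_injective,
          card_image_of_injective _ sub_left_injective, two_mul]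
    _ = #(K.image (r + 1 - ·) ∪ K.image (· - (r + 1))) := (card_union_of_disjoint hdisj).symm
    _ ≤ #(Icc (1 - r) (r - 1) \ (G - G)) := card_le_card hsub

lemma HasEnds.mstd_of_card_missingSums_lt (h : HasEnds G r n n p q) (hn : n < r)
    (hcover : Icc (n + 2) (2 * r - n) ⊆ G + G)
    (hmissing : #(missingSums p p n) + #(missingSums q q n) < 2 * #(missingSums p q n)) :
    MSTD G :=
  (mstd_iff_card_sdiff_lt h.subset).2 <|
    (h.card_sdiff_le_card_missingSums_add hcover).trans_lt <| hmissing.trans_le <|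
      h.two_mul_card_missingSums_le_card_sdiff hn

lemma HasEnds.mstd_of_residues (h : HasEnds G r u v p q) {m : ℕ} [NeZero m] {R : Finset (ZMod m)}
    (hadd : R + R = univ) (hsub : R - R = univ) {T k : ℤ} (hr : u + T + v = r) (hT : 0 ≤ T)
    (hk : 1 ≤ k) (hkT : k ≤ T + m + 1)
    (hu : T + k + 2 * m ≤ u + 2) (hv : T + k + 2 * m ≤ v + 2)
    (hp : ∀ x, k ≤ x → (x : ZMod m) ∈ R → p x) (hq : ∀ x, k ≤ x → (x : ZMod m) ∈ R → q x)
    (hn : n + 3 = 2 * k + m)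
    (hmissing : #(missingSums p p n) + #(missingSums q q n) < 2 * #(missingSums p q n)) :
    MSTD G := by
  have hm : 0 < m := Nat.pos_of_neZero m
  have hcover := Icc_subset_add_self_of_residues hadd hsub hr hT hu hv
    (fun x hx hxR ↦ (h.left x (Icc_subset_Icc_left hk hx)).2 (hp x (mem_Icc.1 hx).1 hxR))
    (fun x hx hxR ↦ (h.right x (Icc_subset_Icc_left hk hx)).2 (hq x (mem_Icc.1 hx).1 hxR))
  refine (h.mono (u' := n) (v' := n) (by omega) (by omega)).mstd_of_card_missingSums_lt
    (by omega) ((Icc_subset_Icc (by omega) (by omega)).trans hcover) hmissing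

end Ends

section Construction

/-- The classes mod 8 that make up, away from the ends, the first of the two complementary sets. -/
def coreResidues : Finset (ZMod 8) := {1, 2, 4, 5}

/-- The positions, counted from an end of the interval, of the elements of the first of the two
complementary sets: `E` prescribes those below `10`, and `coreResidues` all others. -/
def fringe (E : Finset ℤ) (x : ℤ) : Prop :=
  if x < 10 then x ∈ E else (x : ZMod 8) ∈ coreResidues

instance (E : Finset ℤ) : DecidablePred (fringe E) := fun x ↦ by unfold fringe; infer_instance

lemma fringe_iff_of_le {E : Finset ℤ} {x : ℤ} (hx : 10 ≤ x) :
    fringe E x ↔ (x : ZMod 8) ∈ coreResidues := by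
  rw [fringe, if_neg hx.not_gt]

variable {T r u v : ℤ} {G : Finset ℤ}

lemma HasEnds.mstd_of_fringe (h : HasEnds G r u v (fringe {1, 2, 5, 7, 9}) (fringe {1, 2, 5, 8}))
    (hr : u + T + v = r) (hT : 1 ≤ T) (hu : T + 24 ≤ u) (hv : T + 24 ≤ v) : MSTD G :=
  h.mstd_of_residues (R := coreResidues) (n := 25) (k := 10) (by decide) (by decide) hr
    (by omega) (by omega) (by omega) (by omega) (by omega)
    (fun _ hx ↦ (fringe_iff_of_le hx).2) (fun _ hx ↦ (fringe_iff_of_le hx).2) rfl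
    -- the three cardinalities are 1, 2 and 2
    (by decide +kernel)

lemma HasEnds.mstd_of_not_fringe
    (h : HasEnds G r u v (¬ fringe {1, 2, 5, 7, 9} ·) (¬ fringe {1, 2, 5, 8} ·))
    (hr : u + T + v = r) (hT : 1 ≤ T) (hu : T + 24 ≤ u) (hv : T + 24 ≤ v) : MSTD G :=
  h.mstd_of_residues (R := coreResiduesᶜ) (n := 25) (k := 10) (by decide) (by decide) hr
    (by omega) (by omega) (by omega) (by omega) (by omega)
    (fun _ hx hxR ↦ (fringe_iff_of_le hx).not.2 (mem_compl.1 hxR))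
    (fun _ hx hxR ↦ (fringe_iff_of_le hx).not.2 (mem_compl.1 hxR)) rfl
    -- the three cardinalities are 5, 4 and 5
    (by decide +kernel)

lemma MSTD.nonempty {A : Finset ℤ} (h : MSTD A) : A.Nonempty := by
  rw [nonempty_iff_ne_empty]
  rintro rfl
  simp [MSTD] at h

lemma MSTD.add_singleton {A : Finset ℤ} (h : MSTD A) (w : ℤ) : MSTD (A + {w}) := by
  unfold MSTD at *
  rwa [add_sub_add_comm, add_add_add_comm, singleton_sub_singleton, singleton_add_singleton,
    card_add_singleton, card_add_singleton]

lemma exists_mstd_partition_of_translate {A : Finset ℤ} (hA : MSTD A) (hAT : A ⊆ Icc 1 T)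
    (hu : T + 24 ≤ u) (hr : u + 2 * T + 24 ≤ r) :
    ∃ C D : Finset ℤ, MSTD (A + {u}) ∧ MSTD C ∧ MSTD D ∧
      Disjoint (A + {u}) C ∧ Disjoint (A + {u}) D ∧ Disjoint C D ∧
      (A + {u}) ∪ C ∪ D = Icc 1 r := by
  have hT : 1 ≤ T := nonempty_Icc.1 (hA.nonempty.mono hAT)
  obtain ⟨v, hv⟩ : ∃ v, u + T + v = r := ⟨r - u - T, by omega⟩
  set B := A + {u}
  have hBw : B ⊆ Icc (u + 1) (r - v) :=
    (add_subset_add_right hAT).trans (by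
      rw [← Icc_self]
      exact (Icc_add_Icc_subset _ _ _ _).trans (Icc_subset_Icc (by omega) (by omega)))
  obtain ⟨C, hC, hwC⟩ := exists_hasEnds (u := u) (v := v) (r := r) (by omega) (by omega) (by omega)
    (fringe {1, 2, 5, 7, 9}) (fringe {1, 2, 5, 8})
  have hD := hC.sdiff hBw (by omega) (by omega)
  have hBC : B ∪ C ⊆ Icc 1 r :=
    union_subset (hBw.trans (Icc_subset_Icc (by omega) (by omega))) hC.subset
  exact ⟨C, Icc 1 r \ (B ∪ C), hA.add_singleton u, hC.mstd_of_fringe hv hT hu (by omega),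
    hD.mstd_of_not_fringe hv hT hu (by omega), hwC.mono_left hBw,
    disjoint_sdiff.mono_left subset_union_left, disjoint_sdiff.mono_left subset_union_right,
    union_sdiff_of_subset hBC⟩

/-- Conway's MSTD set, of the least possible size and diameter, translated so that its least element
is `1`. -/
def conwaySet : Finset ℤ := {1, 3, 4, 5, 8, 12, 13, 15}

lemma mstd_conwaySet : MSTD conwaySet := by
  unfold MSTD
  decide +kernel

end Construction

lemma sq_le_card_add_of_strong {α : Type*} [AddGroup α] [DecidableEq α] {A : Finset α}
    (hA : A.Nonempty) {k : ℕ} (hstrong : #(A - A) + k * #A ≤ #(A + A)) :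
    (k + 1) ^ 2 ≤ #(A + A) := by
  have hmul : (k + 1) * #A ≤ #(A + A) := by
    linarith [card_le_card_sub_right hA (s := A)]
  have hcard : k + 1 ≤ #A :=
    Nat.le_of_mul_le_mul_right (hmul.trans card_add_le) hA.card_pos
  calc (k + 1) ^ 2 = (k + 1) * (k + 1) := sq _
    _ ≤ (k + 1) * #A := by gcongr
    _ ≤ #(A + A) := hmul

lemma sq_lt_two_mul_of_strong {A : Finset ℤ} {T : ℤ} (hA : A.Nonempty) (hAT : A ⊆ Icc 1 T) {k : ℕ}
    (hstrong : #(A - A) + k * #A ≤ #(A + A)) : ((k : ℤ) + 1) ^ 2 < 2 * T := by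
  have hsq : (k + 1) ^ 2 ≤ #(A + A) := sq_le_card_add_of_strong hA hstrong
  have hle : #(A + A) ≤ #(Icc (1 + 1) (T + T)) :=
    card_le_card ((add_subset_add hAT hAT).trans (Icc_add_Icc_subset 1 T 1 T))
  have hT : 1 ≤ T := nonempty_Icc.1 (hA.mono hAT)
  rw [Int.card_Icc] at hle
  zify at hsq
  omega

theorem stmt12_general (r : ℤ) (hr : 93 ≤ r) :
    ∃ B C D : Finset ℤ, MSTD B ∧ MSTD C ∧ MSTD D ∧
      Disjoint B C ∧ Disjoint B D ∧ Disjoint C D ∧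
      B ∪ C ∪ D = Finset.Icc 1 r :=
  ⟨_, exists_mstd_partition_of_translate (T := 15) (u := 39) mstd_conwaySet (by decide)
    (by norm_num) (by linarith)⟩

theorem stmt12 (T : ℤ) (hT : 0 < T) (A : Finset ℤ)
    (hA : A ⊆ Finset.Icc 1 T) (hTmem : T ∈ A)
    (hstrong : (A - A).card + 10 * A.card ≤ (A + A).card)
    (r : ℤ) (hr : 4 * T + 24 ≤ r) :
    ∃ B C D : Finset ℤ, MSTD B ∧ MSTD C ∧ MSTD D ∧
      Disjoint B C ∧ Disjoint B D ∧ Disjoint C D ∧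
      B ∪ C ∪ D = Finset.Icc 1 r := by
  have hT_large : (10 + 1) ^ 2 < 2 * T := sq_lt_two_mul_of_strong ⟨T, hTmem⟩ hA hstrong
  exact stmt12_general r (by omega)
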